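/- Suppose (i) E has supersingular reduction at all primes of F above p; (ii) λ_cyc : H^1(F_S/F_cyc, E_{p^∞}) → ⊕_{v∈S} J_v(E/F_cyc) is surjective; (iii) H^2(F_S/F, E_{p^∞}) = 0; and (iv) H^1(Γ, Sel_p(E/F_cyc)) = 0 (equivalently, λ^Γ_cyc is surjective, equivalently δ is surjective). Then the Λ(Γ)-module X(E/F_cyc) admits no non-trivial finite submodule. -/

import Mathlib

/-!
Write `T` for the variable of `Λ(Γ) = ℤ_p[[T]]`. Vanishing of `H^1(Γ, Sel)` says that `g - 1`
is surjective on the Selmer group, so dually `T` acts injectively on `X`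
(`eq_zero_of_X_smul_eq_zero`). For `y` in a finite submodule the sequence `T ^ n • y` repeats,
and cancelling a power of `T` gives `(1 - T ^ m) • y = 0` with `m > 0`; since `1 - T ^ m` is a
unit of `ℤ_p[[T]]`, it follows that `y = 0`.
-/

/-!
# Setting (Hatley–Lei, "On Selmer groups in the supersingular reduction case", §2)

Let `p` be an odd prime and `E` an elliptic curve over a number field `F` with good
supersingular reduction at all primes of `F` above `p`.  Let `S` be the (finite) set of
primes of `F` lying above `p` together with the primes of bad reduction of `E`, and let
`F_S` be the maximal extension of `F` unramified outside `S`.  For `v ∈ S` set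
`J_v(E/F) = ⊕_{w∣v} H^1(F_w, E)(p)` and `J_v(E/F_cyc) = lim_→ J_v(E/L)`.
Let `F_cyc` be the cyclotomic `Z_p`-extension of `F` and `Γ = Gal(F_cyc/F) ≅ ℤ_p`.

Since `Γ ≅ ℤ_p` is procyclic and acts continuously on the discrete modules over `F_cyc`,
we model the `Γ`-action by the action of a fixed topological generator `g`; the
`Γ`-invariants of a module `A` are the fixed points of `g`, and (continuous) `H^1(Γ, A)`
is the cokernel of `g - 1` on `A`.

The structure `CycSelmerSetting` records all the data of the "fundamental diagram"
comparing the defining sequence of `Sel_p(E/F)` with the `Γ`-invariants of the defining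
sequence of `Sel_p(E/F_cyc)`:  the Galois cohomology groups, the localization maps
`λ = λ_F` and `λ_cyc`, and the restriction maps `β`, `γ = ⊕ γ_v` (which land in the
`Γ`-invariants and commute with the localization maps).
-/

structure CycSelmerSetting where
  /-- the odd prime `p` -/
  p : ℕ
  [fact_p : Fact p.Prime]
  hodd : p ≠ 2
  /-- the base number field `F` -/
  F : Type
  [fieldF : Field F]
  [nfF : NumberField F]
  /-- the elliptic curve `E/F` -/
  E : WeierstrassCurve F
  [ellE : E.IsElliptic]
  /-- the finite set `S` of primes of `F` above `p` together with the bad reduction primes -/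
  S : Type
  [finS : Fintype S]
  /-- the predicate `v ∣ p` on `S` -/
  overP : S → Prop
  /-- the predicate "`E` has good supersingular reduction at `v`" -/
  IsSupersingular : S → Prop
  /-- `E` has supersingular reduction at all primes of `F` above `p` -/
  ss_at_p : ∀ v, overP v → IsSupersingular v
  /-- `H^1(F_S/F, E_{p^∞})` -/
  H1F : Type
  [abH1F : AddCommGroup H1F]
  /-- `H^2(F_S/F, E_{p^∞})` -/
  H2F : Type
  [abH2F : AddCommGroup H2F]
  /-- `J_v(E/F) = ⊕_{w∣v} H^1(F_w, E)(p)` -/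
  JF : S → Type
  [abJF : ∀ v, AddCommGroup (JF v)]
  /-- `H^1(F_S/F_cyc, E_{p^∞})` -/
  H1Cyc : Type
  [abH1Cyc : AddCommGroup H1Cyc]
  /-- `J_v(E/F_cyc) = lim_→ J_v(E/L)` -/
  JCyc : S → Type
  [abJCyc : ∀ v, AddCommGroup (JCyc v)]
  /-- the localization map `λ = λ_F : H^1(F_S/F, E_{p^∞}) → ⊕_{v∈S} J_v(E/F)`
  (whose kernel is `Sel_p(E/F)`) -/
  lamF : H1F →+ ∀ v, JF v
  /-- the localization map `λ_cyc : H^1(F_S/F_cyc, E_{p^∞}) → ⊕_{v∈S} J_v(E/F_cyc)`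
  (whose kernel is `Sel_p(E/F_cyc)`) -/
  lamCyc : H1Cyc →+ ∀ v, JCyc v
  /-- action of a fixed topological generator of `Γ` on `H^1(F_S/F_cyc, E_{p^∞})` -/
  gH1 : H1Cyc ≃+ H1Cyc
  /-- action of the generator of `Γ` on `J_v(E/F_cyc)` -/
  gJ : ∀ v, JCyc v ≃+ JCyc v
  /-- `λ_cyc` is `Γ`-equivariant -/
  lamCyc_equivariant : ∀ x v, gJ v (lamCyc x v) = lamCyc (gH1 x) v
  /-- the restriction map `β : H^1(F_S/F, E_{p^∞}) → H^1(F_S/F_cyc, E_{p^∞})` -/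
  β : H1F →+ H1Cyc
  /-- `β` takes values in the `Γ`-invariants `H^1(F_S/F_cyc, E_{p^∞})^Γ` -/
  β_inv : ∀ x, gH1 (β x) = β x
  /-- the restriction maps `γ_v : J_v(E/F) → J_v(E/F_cyc)` -/
  γv : ∀ v, JF v →+ JCyc v
  /-- each `γ_v` takes values in the `Γ`-invariants `J_v(E/F_cyc)^Γ` -/
  γv_inv : ∀ v x, gJ v (γv v x) = γv v x
  /-- commutativity of the fundamental diagram: `γ ∘ λ = λ_cyc ∘ β` -/
  diag_comm : ∀ x v, γv v (lamF x v) = lamCyc (β x) v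

namespace CycSelmerSetting

attribute [instance] fact_p fieldF nfF ellE finS abH1F abH2F abJF abH1Cyc abJCyc

variable (D : CycSelmerSetting)

/-- `Sel_p(E/F_cyc)`, the Selmer group over `F_cyc`: the kernel of `λ_cyc`. -/
def SelCyc : AddSubgroup D.H1Cyc := D.lamCyc.ker

/-- Surjectivity of the map `λ^Γ_cyc : H^1(F_S/F_cyc, E_{p^∞})^Γ → ⊕_{v∈S} J_v(E/F_cyc)^Γ`
induced by `λ_cyc` on `Γ`-invariants. -/
def LamCycGammaSurjective : Prop :=
  ∀ y : ∀ v, D.JCyc v, (∀ v, D.gJ v (y v) = y v) →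
    ∃ x : D.H1Cyc, D.gH1 x = x ∧ D.lamCyc x = y

/-- Vanishing of `H^1(Γ, Sel_p(E/F_cyc))`.  Since `Γ ≅ ℤ_p` is procyclic with topological
generator `g` and acts on the discrete module `Sel_p(E/F_cyc)`, `H^1(Γ, ·)` is the
cokernel of `g - 1`; its vanishing says `g - 1` is surjective on `Sel_p(E/F_cyc)`. -/
def H1GammaSelVanishes : Prop :=
  ∀ x ∈ D.SelCyc, ∃ y ∈ D.SelCyc, D.gH1 y - y = x

/-- Surjectivity of the natural map `δ : ker γ → coker λ` arising from the fundamental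
diagram, where `δ` is the restriction to `ker γ ⊆ ⊕_{v∈S} J_v(E/F)` of the projection
onto `coker λ = (⊕_{v∈S} J_v(E/F)) / Im λ`. -/
def DeltaSurjective : Prop :=
  ∀ y : ∀ v, D.JF v, ∃ z : ∀ v, D.JF v,
    (∀ v, D.γv v (z v) = 0) ∧ ∃ x : D.H1F, y - z = D.lamF x

end CycSelmerSetting

/-- The setting of Theorem 2.13: the fundamental-diagram data together with the dual
Selmer group `X(E/F_cyc)`, the Pontryagin dual of `Sel_p(E/F_cyc)`, viewed as a module
over the Iwasawa algebra `Λ(Γ) = Z_p[[Γ]] ≅ Z_p[[T]]` (realized as `PowerSeries ℤ_[p]`,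
where a fixed topological generator `g` of `Γ` corresponds to `1 + T`).  The Pontryagin
dual of the discrete torsion group `Sel_p(E/F_cyc)` is its group of homomorphisms to
`ℚ/ℤ`, and the `Λ(Γ)`-action is compatible with the `Γ`-action dual to that on
`Sel_p(E/F_cyc) = ker λ_cyc`. -/
structure DualCycSelmerSetting extends CycSelmerSetting where
  /-- `X(E/F_cyc)`, the Pontryagin dual of `Sel_p(E/F_cyc)`, as a `Λ(Γ)`-module -/
  X : Type
  [abX : AddCommGroup X]
  [modX : Module (PowerSeries (PadicInt p)) X]
  /-- `X(E/F_cyc)` is, as a group, the Pontryagin dual `Hom(Sel_p(E/F_cyc), ℚ/ℤ)` -/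
  xiso : X ≃+ (↥lamCyc.ker →+ AddCircle (1 : ℚ))
  /-- the action of `1 + T ∈ Λ(Γ)` on `X(E/F_cyc)` is dual to the action of the
  generator `g` of `Γ` on `Sel_p(E/F_cyc)` -/
  xiso_compat : ∀ (f : X) (x : H1Cyc) (hx : x ∈ lamCyc.ker) (hgx : gH1 x ∈ lamCyc.ker),
    xiso (((PowerSeries.X : PowerSeries (PadicInt p)) + 1) • f) ⟨x, hx⟩ =
      xiso f ⟨gH1 x, hgx⟩

namespace DualCycSelmerSetting

attribute [instance] abX modX

/-- The dual of the surjectivity of `g - 1` on the Selmer group: multiplication by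
`T = (1 + T) - 1` on its Pontryagin dual is precomposition with `g - 1`, hence injective. -/
theorem eq_zero_of_X_smul_eq_zero (D : DualCycSelmerSetting)
    (hH1 : D.toCycSelmerSetting.H1GammaSelVanishes) (f : D.X)
    (hf : (PowerSeries.X : PowerSeries (PadicInt D.p)) • f = 0) : f = 0 := by
  apply D.xiso.injective
  rw [map_zero]
  ext ⟨x, hx⟩
  obtain ⟨y, hy, rfl⟩ := hH1 x hx
  have hy' : y ∈ D.lamCyc.ker := hy
  have hgy : D.gH1 y ∈ D.lamCyc.ker := by
    simpa using D.lamCyc.ker.add_mem hx hy'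
  have key := D.xiso_compat f y hy' hgy
  rw [add_smul, hf, one_smul, zero_add] at key
  have hsub : (⟨D.gH1 y - y, hx⟩ : D.lamCyc.ker) = ⟨D.gH1 y, hgy⟩ - ⟨y, hy'⟩ := rfl
  rw [hsub, map_sub, ← key, sub_self, AddMonoidHom.zero_apply]

theorem X_pow_smul_injective (D : DualCycSelmerSetting)
    (hH1 : D.toCycSelmerSetting.H1GammaSelVanishes) (n : ℕ) :
    Function.Injective
      fun f : D.X => (PowerSeries.X : PowerSeries (PadicInt D.p)) ^ n • f := by
  induction n with
  | zero => intro a b h; simpa using h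
  | succ n ih =>
    intro a b h
    refine ih (sub_eq_zero.1 (eq_zero_of_X_smul_eq_zero D hH1 _ ?_))
    simpa only [smul_sub, smul_smul, ← pow_succ', sub_eq_zero] using h

/-- Suppose (i) `E` has supersingular reduction at all primes of `F`
above `p` (part of the setting, `ss_at_p`); (ii) `λ_cyc` is surjective;
(iii) `H^2(F_S/F, E_{p^∞}) = 0`; and (iv) `H^1(Γ, Sel_p(E/F_cyc)) = 0` (equivalently
`λ^Γ_cyc` is surjective, equivalently `δ` is surjective).  Then the `Λ(Γ)`-module
`X(E/F_cyc)` admits no non-trivial finite submodule. -/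
theorem no_nontrivial_finite_submodule (D : DualCycSelmerSetting)
    (hss : ∀ v, D.overP v → D.IsSupersingular v)
    (hsurj : Function.Surjective D.lamCyc)
    (h2 : Subsingleton D.H2F)
    (hH1 : D.toCycSelmerSetting.H1GammaSelVanishes) :
    ∀ Y : Submodule (PowerSeries (PadicInt D.p)) D.X,
      (Y : Set D.X).Finite → Y = ⊥ := by
  intro Y hY
  refine (Submodule.eq_bot_iff _).2 fun y hy => ?_
  -- By finiteness of `Y`, two of the elements `T ^ n • y` coincide.
  obtain ⟨i, -, j, -, hij, h⟩ := Set.infinite_univ.exists_lt_map_eq_of_mapsTo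
    (f := fun n : ℕ => (PowerSeries.X : PowerSeries (PadicInt D.p)) ^ n • y)
    (fun n _ => Y.smul_mem _ hy) hY
  obtain ⟨k, rfl⟩ := Nat.exists_eq_add_of_lt hij
  have h1 : y = (PowerSeries.X : PowerSeries (PadicInt D.p)) ^ (k + 1) • y := by
    refine X_pow_smul_injective D hH1 i ?_
    simpa only [smul_smul, ← pow_add, add_assoc] using h
  have hu : IsUnit (1 - (PowerSeries.X : PowerSeries (PadicInt D.p)) ^ (k + 1)) := by
    simp [PowerSeries.isUnit_iff_constantCoeff]
  rw [← hu.smul_eq_zero, sub_smul, one_smul, sub_eq_zero]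
  exact h1

end DualCycSelmerSetting
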